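/- Let 𝒜 = (A_1,…,A_m) be an m-tuple of n×n complex matrices such that Σ_{k=1}^m A_k A_kᴴ is positive definite. Then the function f(X) := log det(Σ_{k=1}^m A_k X A_kᴴ) − log det X, defined on positive definite Hermitian X (where the first determinant is a positive real for every such X), is geodesically convex: for every positive definite Hermitian X and every Hermitian S, the map t ↦ f(X^{1/2} e^{tS} X^{1/2}) is convex on ℝ. -/

import Mathlib

noncomputable section
open scoped Classical
open Matrix
open scoped ComplexOrder

/-- The completely positive operator `T_𝒜(X) = ∑ k, A k * X * (A k)ᴴ`. -/
def Tcp {m n : ℕ} (A : Fin m → Matrix (Fin n) (Fin n) ℂ)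
    (X : Matrix (Fin n) (Fin n) ℂ) : Matrix (Fin n) (Fin n) ℂ :=
  ∑ k, A k * X * (A k)ᴴ

/-- The positive semidefinite square root of a positive semidefinite matrix
(Mathlib's former `Matrix.PosSemidef.sqrt`, since removed). -/
def Matrix.PosSemidef.sqrt {n 𝕜 : Type*} [Fintype n] [RCLike 𝕜] [DecidableEq n]
    {A : Matrix n n 𝕜} (hA : A.PosSemidef) : Matrix n n 𝕜 :=
  hA.1.eigenvectorUnitary.1 * diagonal ((RCLike.ofReal : ℝ → 𝕜) ∘ Real.sqrt ∘ hA.1.eigenvalues) *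
    (star hA.1.eigenvectorUnitary : Matrix n n 𝕜)

/-- The positive semidefinite square root (junk value `0` off PSD matrices). -/
def matSqrt {n : ℕ} (X : Matrix (Fin n) (Fin n) ℂ) : Matrix (Fin n) (Fin n) ℂ :=
  if h : X.PosSemidef then h.sqrt else 0

/-- `f(X) = log det (∑ k, A_k X A_kᴴ) - log det X`. -/
def fdet {m n : ℕ} (A : Fin m → Matrix (Fin n) (Fin n) ℂ)
    (X : Matrix (Fin n) (Fin n) ℂ) : ℝ :=
  Real.log (Tcp A X).det.re - Real.log X.det.re

/-!
Diagonalise `S` by a unitary `U` with eigenvalues `λ`. Along the geodesic the argument of `f` is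
`C * diag (e^{tλ}) * Cᴴ` with `C = X^{1/2} U`, so
`∑ k, A_k (⋯) A_kᴴ = M * diag (e^{tλ}, …, e^{tλ}) * Mᴴ`, where `M = (A_1 C ⋯ A_m C)` is a block
row of full rank. By the Cauchy–Binet formula the determinant of this product is a sum of
exponentials of linear functions of `t`, with the nonnegative weights `|minor of M|²`.
The logarithm of such a sum is convex, while `log det (C * diag (e^{tλ}) * Cᴴ)` is affine in `t`.
-/

open scoped Nat Kronecker

section CauchyBinet

variable {ι κ R : Type*} [Fintype ι] [DecidableEq ι] [Fintype κ] [CommRing R]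

theorem det_mul_eq_sum_det_submatrix_mul_prod (M : Matrix ι κ R) (N : Matrix κ ι R) :
    (M * N).det = ∑ p : ι → κ, (M.submatrix id p).det * ∏ i, N (p i) i := by
  simp only [det_apply', mul_apply, Finset.prod_univ_sum, Finset.mul_sum, Finset.sum_mul,
    Fintype.piFinset_univ, submatrix_apply, id, Finset.prod_mul_distrib, mul_assoc]
  exact Finset.sum_comm

theorem det_mul_eq_sum_det_submatrix_mul_sign_mul_prod (M : Matrix ι κ R) (N : Matrix κ ι R)
    (σ : Equiv.Perm ι) :
    (M * N).det =
      ∑ p : ι → κ, (M.submatrix id p).det * ((Equiv.Perm.sign σ : ℤ) * ∏ i, N (p (σ i)) i) := by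
  rw [det_mul_eq_sum_det_submatrix_mul_prod, ← (σ.arrowCongr (Equiv.refl κ)).symm.sum_comp]
  refine Finset.sum_congr rfl fun p _ ↦ ?_
  have det_permuted : (M.submatrix id ((σ.arrowCongr (Equiv.refl κ)).symm p)).det =
      (Equiv.Perm.sign σ : ℤ) * (M.submatrix id p).det := det_permute' σ (M.submatrix id p)
  rw [det_permuted, mul_assoc, mul_left_comm]
  rfl

/-- Cauchy–Binet: summing over all functions `p : ι → κ` instead of the `card ι`-element subsets
of `κ` counts each product of minors `(card ι)!` times, and non-injective `p` contribute zero. -/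
theorem factorial_card_mul_det_mul (M : Matrix ι κ R) (N : Matrix κ ι R) :
    ((Fintype.card ι)! : R) * (M * N).det =
      ∑ p : ι → κ, (M.submatrix id p).det * (N.submatrix p id).det := by
  calc ((Fintype.card ι)! : R) * (M * N).det = ∑ _σ : Equiv.Perm ι, (M * N).det := by
        simp [Fintype.card_perm]
    _ = ∑ σ : Equiv.Perm ι, ∑ p : ι → κ,
          (M.submatrix id p).det * ((Equiv.Perm.sign σ : ℤ) * ∏ i, N (p (σ i)) i) :=
        Finset.sum_congr rfl fun σ _ ↦ det_mul_eq_sum_det_submatrix_mul_sign_mul_prod M N σ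
    _ = ∑ p : ι → κ, (M.submatrix id p).det * (N.submatrix p id).det := by
        rw [Finset.sum_comm]
        simp only [det_apply' (N.submatrix _ id), Finset.mul_sum, submatrix_apply, id]

theorem factorial_card_mul_det_mul_diagonal_mul_conjTranspose [DecidableEq κ] [StarRing R]
    (M : Matrix ι κ R) (d : κ → R) :
    ((Fintype.card ι)! : R) * (M * diagonal d * Mᴴ).det =
      ∑ p : ι → κ, (M.submatrix id p).det * star (M.submatrix id p).det * ∏ i, d (p i) := by
  rw [Matrix.mul_assoc, factorial_card_mul_det_mul]
  refine Finset.sum_congr rfl fun p _ ↦ ?_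
  have minor_eq : (diagonal d * Mᴴ).submatrix p id =
      diagonal (d ∘ p) * (M.submatrix id p)ᴴ := by
    ext i j
    simp [diagonal_mul]
  rw [minor_eq, det_mul, det_diagonal, det_conjTranspose, mul_comm (∏ i, _), mul_assoc]
  rfl

end CauchyBinet

section LogSumExp

variable {ι E : Type*} [AddCommMonoid E] [Module ℝ E]

theorem convexOn_log_sum_mul_exp {s : Finset ι} {D : Set E} {c : ι → ℝ} {g : ι → E → ℝ}
    (hD : Convex ℝ D) (hg : ∀ i ∈ s, ConvexOn ℝ D (g i)) (hc : ∀ i ∈ s, 0 ≤ c i)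
    (hpos : ∀ x ∈ D, 0 < ∑ i ∈ s, c i * Real.exp (g i x)) :
    ConvexOn ℝ D fun x ↦ Real.log (∑ i ∈ s, c i * Real.exp (g i x)) := by
  refine ⟨hD, fun x hx y hy a b ha hb hab ↦ ?_⟩
  set P := ∑ i ∈ s, c i * Real.exp (g i x)
  set Q := ∑ i ∈ s, c i * Real.exp (g i y)
  have hP₀ : 0 < P := hpos x hx
  have hQ₀ : 0 < Q := hpos y hy
  simp only [smul_eq_mul]
  set L := a * Real.log P + b * Real.log Q with hL
  -- Convexity of `exp` is applied to the exponents normalised by `log P` and `log Q`.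
  have exp_le : ∀ i ∈ s, Real.exp (g i (a • x + b • y)) ≤
      Real.exp L * (a * (Real.exp (g i x) / P) + b * (Real.exp (g i y) / Q)) := by
    intro i hi
    have hexp := convexOn_exp.2 (Set.mem_univ (g i x - Real.log P))
      (Set.mem_univ (g i y - Real.log Q)) ha hb hab
    simp only [smul_eq_mul, Real.exp_sub, Real.exp_log hP₀, Real.exp_log hQ₀] at hexp
    calc Real.exp (g i (a • x + b • y)) ≤ Real.exp (a * g i x + b * g i y) :=
          Real.exp_le_exp.2 ((hg i hi).2 hx hy ha hb hab)
      _ = Real.exp L * Real.exp (a * (g i x - Real.log P) + b * (g i y - Real.log Q)) := by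
          rw [← Real.exp_add, hL]
          ring_nf
      _ ≤ _ := by gcongr
  rw [Real.log_le_iff_le_exp (hpos _ (hD hx hy ha hb hab))]
  calc ∑ i ∈ s, c i * Real.exp (g i (a • x + b • y))
      ≤ ∑ i ∈ s, c i * (Real.exp L *
          (a * (Real.exp (g i x) / P) + b * (Real.exp (g i y) / Q))) :=
        Finset.sum_le_sum fun i hi ↦ mul_le_mul_of_nonneg_left (exp_le i hi) (hc i hi)
    _ = Real.exp L * (a * (P / P) + b * (Q / Q)) := by
        have sum_div_P : P / P = ∑ i ∈ s, c i * Real.exp (g i x) / P := Finset.sum_div ..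
        have sum_div_Q : Q / Q = ∑ i ∈ s, c i * Real.exp (g i y) / Q := Finset.sum_div ..
        rw [sum_div_P, sum_div_Q]
        simp only [Finset.mul_sum, ← Finset.sum_add_distrib]
        exact Finset.sum_congr rfl fun i _ ↦ by ring
    _ = Real.exp L := by rw [div_self hP₀.ne', div_self hQ₀.ne', mul_one, mul_one, hab, mul_one]

end LogSumExp

section BlockRow

variable {κ r n : Type*}

/-- The block matrix `(A_1 A_2 ⋯ A_m)`, with columns indexed by the pairs (block, column in the
block). It turns `∑ k, A_k X A_kᴴ` into a single congruence of the block diagonal `1 ⊗ₖ X`. -/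
def blockRow {R : Type*} (A : κ → Matrix r n R) : Matrix r (κ × n) R :=
  of fun i q ↦ A q.1 i q.2

theorem blockRow_mul_one_kronecker_mul_conjTranspose {R : Type*} [Fintype κ] [DecidableEq κ]
    [Fintype n] [Semiring R] [Star R] (A : κ → Matrix r n R) (X : Matrix n n R) :
    blockRow A * ((1 : Matrix κ κ R) ⊗ₖ X) * (blockRow A)ᴴ = ∑ k, A k * X * (A k)ᴴ := by
  ext i j
  simp [blockRow, mul_apply, Matrix.sum_apply, Fintype.sum_prod_type, one_apply]

variable {𝕜 : Type*} [RCLike 𝕜] [Fintype κ] [Fintype n]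

theorem vecMul_injective_of_posDef_mul_conjTranspose [Fintype r] {M : Matrix r n 𝕜}
    (hM : (M * Mᴴ).PosDef) : Function.Injective M.vecMul := by
  classical
  have hinj : Function.Injective (Mᴴ.vecMul ∘ M.vecMul) := by
    simpa only [Function.comp_def, vecMul_vecMul] using! vecMul_injective_of_isUnit hM.isUnit
  exact hinj.of_comp

theorem blockRow_vecMul_injective [Fintype r] {A : κ → Matrix r n 𝕜}
    (hA : (∑ k, A k * (A k)ᴴ).PosDef) : Function.Injective (blockRow A).vecMul := by
  classical
  have hgram : blockRow A * (blockRow A)ᴴ = ∑ k, A k * (A k)ᴴ := by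
    simpa using blockRow_mul_one_kronecker_mul_conjTranspose A 1
  exact vecMul_injective_of_posDef_mul_conjTranspose (hgram ▸ hA)

theorem posDef_sum_mul_mul_conjTranspose [Finite r] {A : κ → Matrix r n 𝕜}
    (hA : (∑ k, A k * (A k)ᴴ).PosDef) {X : Matrix n n 𝕜} (hX : X.PosDef) :
    (∑ k, A k * X * (A k)ᴴ).PosDef := by
  classical
  have := Fintype.ofFinite r
  rw [← blockRow_mul_one_kronecker_mul_conjTranspose]
  exact (PosDef.one.kronecker hX).mul_mul_conjTranspose_same (blockRow_vecMul_injective hA)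

end BlockRow

section DiagonalExp

variable {κ r n 𝕜 : Type*} [RCLike 𝕜] [Fintype κ] [Fintype r] [DecidableEq r] [Fintype n]
  [DecidableEq n]

theorem re_det_mul_diagonal_exp_mul_conjTranspose (M : Matrix r n 𝕜) (l : n → ℝ) :
    RCLike.re (M * diagonal (fun i ↦ (Real.exp (l i) : 𝕜)) * Mᴴ).det =
      ∑ p : r → n, ‖(M.submatrix id p).det‖ ^ 2 / (Fintype.card r)! * Real.exp (∑ i, l (p i)) := by
  have hcard : ((Fintype.card r)! : ℝ) ≠ 0 := by positivity
  have hdet : ((Fintype.card r)! : 𝕜) * (M * diagonal (fun i ↦ (Real.exp (l i) : 𝕜)) * Mᴴ).det =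
      ((∑ p : r → n, ‖(M.submatrix id p).det‖ ^ 2 * Real.exp (∑ i, l (p i)) : ℝ) : 𝕜) := by
    rw [factorial_card_mul_det_mul_diagonal_mul_conjTranspose]
    push_cast [Real.exp_sum]
    simp only [RCLike.star_def, RCLike.mul_conj]
  have hre := congrArg RCLike.re hdet
  rw [RCLike.ofReal_re, ← RCLike.ofReal_natCast, RCLike.re_ofReal_mul] at hre
  rw [← mul_right_inj' hcard, hre, Finset.mul_sum]
  exact Finset.sum_congr rfl fun p _ ↦ by field_simp

theorem convexOn_log_det_mul_diagonal_exp_mul_conjTranspose {M : Matrix r n 𝕜}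
    (hM : Function.Injective M.vecMul) :
    ConvexOn ℝ Set.univ fun l : n → ℝ ↦
      Real.log (RCLike.re (M * diagonal (fun i ↦ (Real.exp (l i) : 𝕜)) * Mᴴ).det) := by
  have hpos (l : n → ℝ) : (M * diagonal (fun i ↦ (Real.exp (l i) : 𝕜)) * Mᴴ).PosDef :=
    (PosDef.diagonal fun i ↦ by simpa using Real.exp_pos (l i)).mul_mul_conjTranspose_same hM
  have hdet_pos (l : n → ℝ) := (RCLike.pos_iff.1 (hpos l).det_pos).1
  simp only [re_det_mul_diagonal_exp_mul_conjTranspose] at hdet_pos ⊢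
  refine convexOn_log_sum_mul_exp convex_univ (fun p _ ↦ ?_) (fun p _ ↦ by positivity)
    fun l _ ↦ hdet_pos l
  simpa [Finset.sum_fn] using (∑ i, (LinearMap.proj (p i) : (n → ℝ) →ₗ[ℝ] ℝ)).convexOn convex_univ

theorem convexOn_log_det_sum_mul_diagonal_exp {A : κ → Matrix r n 𝕜}
    (hA : (∑ k, A k * (A k)ᴴ).PosDef) {C : Matrix n n 𝕜} (hC : IsUnit C) :
    ConvexOn ℝ Set.univ fun l : n → ℝ ↦ Real.log (RCLike.re
      (∑ k, A k * (C * diagonal (fun i ↦ (Real.exp (l i) : 𝕜)) * Cᴴ) * (A k)ᴴ).det) := by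
  classical
  set M := blockRow A * ((1 : Matrix κ κ 𝕜) ⊗ₖ C) with hM
  have hM_inj : Function.Injective M.vecMul := by
    have hcomp := (vecMul_injective_of_isUnit ((isUnit_one (M := Matrix κ κ 𝕜)).kronecker hC)).comp
      (blockRow_vecMul_injective hA)
    simpa only [Function.comp_def, vecMul_vecMul] using! hcomp
  have hsum (l : n → ℝ) :
      ∑ k, A k * (C * diagonal (fun i ↦ (Real.exp (l i) : 𝕜)) * Cᴴ) * (A k)ᴴ =
        M * diagonal (fun q : κ × n ↦ (Real.exp (l q.2) : 𝕜)) * Mᴴ := by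
    set D := diagonal (fun i ↦ (Real.exp (l i) : 𝕜)) with hD
    have hdiag : diagonal (fun q : κ × n ↦ (Real.exp (l q.2) : 𝕜)) = (1 : Matrix κ κ 𝕜) ⊗ₖ D := by
      simp [hD, ← diagonal_one, diagonal_kronecker_diagonal]
    have hcongr : (1 : Matrix κ κ 𝕜) ⊗ₖ (C * D * Cᴴ) =
        ((1 : Matrix κ κ 𝕜) ⊗ₖ C) * ((1 : Matrix κ κ 𝕜) ⊗ₖ D) * ((1 : Matrix κ κ 𝕜) ⊗ₖ C)ᴴ := by
      simp only [conjTranspose_kronecker, conjTranspose_one, ← mul_kronecker_mul, Matrix.one_mul]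
    rw [← blockRow_mul_one_kronecker_mul_conjTranspose, hcongr, hdiag, hM, conjTranspose_mul]
    simp only [Matrix.mul_assoc]
  simp only [hsum]
  exact (convexOn_log_det_mul_diagonal_exp_mul_conjTranspose hM_inj).comp_linearMap
    (LinearMap.funLeft ℝ ℝ Prod.snd)

theorem log_det_mul_diagonal_exp_mul_conjTranspose {C : Matrix n n 𝕜} (hC : IsUnit C)
    (l : n → ℝ) :
    Real.log (RCLike.re (C * diagonal (fun i ↦ (Real.exp (l i) : 𝕜)) * Cᴴ).det) =
      Real.log (‖C.det‖ ^ 2) + ∑ i, l i := by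
  have hdet : (C * diagonal (fun i ↦ (Real.exp (l i) : 𝕜)) * Cᴴ).det =
      ((‖C.det‖ ^ 2 * Real.exp (∑ i, l i) : ℝ) : 𝕜) := by
    rw [det_mul_right_comm, det_mul, det_mul, det_conjTranspose, det_diagonal, RCLike.star_def,
      RCLike.mul_conj]
    push_cast [Real.exp_sum]
    rfl
  have hC_det : ‖C.det‖ ^ 2 ≠ 0 :=
    pow_ne_zero 2 (norm_ne_zero_iff.2 ((isUnit_iff_isUnit_det C).1 hC).ne_zero)
  rw [hdet, RCLike.ofReal_re, Real.log_mul hC_det (Real.exp_ne_zero _), Real.log_exp]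

end DiagonalExp

theorem exp_smul_eq_eigenvectorUnitary_mul_diagonal_exp {n 𝕜 : Type*} [RCLike 𝕜] [Fintype n]
    [DecidableEq n] {S : Matrix n n 𝕜} (hS : S.IsHermitian) (t : ℝ) :
    NormedSpace.exp (t • S) = (hS.eigenvectorUnitary : Matrix n n 𝕜) *
      diagonal (fun i ↦ (Real.exp (t * hS.eigenvalues i) : 𝕜)) *
      (hS.eigenvectorUnitary : Matrix n n 𝕜)ᴴ := by
  set U := Unitary.toUnits hS.eigenvectorUnitary
  have hdiag : t • S = (U : Matrix n n 𝕜) *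
      diagonal (fun i ↦ ((t * hS.eigenvalues i : ℝ) : 𝕜)) * (U⁻¹ : (Matrix n n 𝕜)ˣ) := by
    have smul_diagonal : diagonal (fun i ↦ ((t * hS.eigenvalues i : ℝ) : 𝕜)) =
        t • diagonal (RCLike.ofReal ∘ hS.eigenvalues : n → 𝕜) := by
      rw [← diagonal_smul]
      congr 1
      ext i
      simp [RCLike.real_smul_eq_coe_mul]
    rw [smul_diagonal, mul_smul_comm, smul_mul_assoc]
    exact congrArg (t • ·) hS.spectral_theorem
  rw [hdiag, exp_units_conj, exp_diagonal]
  congr 3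
  ext i
  rw [Pi.coe_exp, Real.exp_eq_exp_ℝ]
  exact (NormedSpace.algebraMap_exp_comm _).symm

theorem matSqrt_posDef {n : ℕ} {X : Matrix (Fin n) (Fin n) ℂ} (hX : X.PosDef) :
    (matSqrt X).PosDef := by
  have hU : IsUnit (hX.posSemidef.1.eigenvectorUnitary : Matrix (Fin n) (Fin n) ℂ) :=
    Unitary.isUnit_coe
  rw [matSqrt, dif_pos hX.posSemidef, PosSemidef.sqrt, hU.posDef_star_right_conjugate_iff,
    posDef_diagonal_iff]
  intro i
  simpa using hX.eigenvalues_pos i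

theorem fdet_geodesically_convex_general {κ r n 𝕜 : Type*} [RCLike 𝕜] [Fintype κ] [Fintype r]
    [DecidableEq r] [Fintype n] [DecidableEq n] (A : κ → Matrix r n 𝕜)
    (hA : (∑ k, A k * (A k)ᴴ).PosDef) :
    (∀ X : Matrix n n 𝕜, X.PosDef →
        0 < RCLike.re (∑ k, A k * X * (A k)ᴴ).det ∧ RCLike.im (∑ k, A k * X * (A k)ᴴ).det = 0)
      ∧ (∀ W : Matrix n n 𝕜, IsUnit W → ∀ S : Matrix n n 𝕜, S.IsHermitian →
          ConvexOn ℝ Set.univ fun t : ℝ ↦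
            Real.log (RCLike.re (∑ k, A k * (W * NormedSpace.exp (t • S) * Wᴴ) * (A k)ᴴ).det) -
              Real.log (RCLike.re (W * NormedSpace.exp (t • S) * Wᴴ).det)) := by
  refine ⟨fun X hX ↦ RCLike.pos_iff.1 (posDef_sum_mul_mul_conjTranspose hA hX).det_pos,
    fun W hW S hS ↦ ?_⟩
  set C := W * (hS.eigenvectorUnitary : Matrix n n 𝕜) with hC
  have hC_unit : IsUnit C := hW.mul Unitary.isUnit_coe
  have hgeodesic (t : ℝ) : W * NormedSpace.exp (t • S) * Wᴴ =
      C * diagonal (fun i ↦ (Real.exp (t * hS.eigenvalues i) : 𝕜)) * Cᴴ := by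
    simp only [exp_smul_eq_eigenvectorUnitary_mul_diagonal_exp hS, hC, conjTranspose_mul,
      Matrix.mul_assoc]
  simp only [hgeodesic, log_det_mul_diagonal_exp_mul_conjTranspose hC_unit, ← Finset.mul_sum]
  have hconvex := (convexOn_log_det_sum_mul_diagonal_exp hA hC_unit).comp_linearMap
    (LinearMap.toSpanSingleton ℝ (n → ℝ) hS.eigenvalues)
  have hconcave := ((LinearMap.mulRight ℝ (∑ i, hS.eigenvalues i)).concaveOn
    convex_univ).add_const (Real.log (‖C.det‖ ^ 2))
  simpa [Function.comp_def, Pi.sub_def, add_comm] using! hconvex.sub hconcave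

/-- If `∑ k, A_k A_kᴴ` is positive definite, then `det (∑ k, A_k X A_kᴴ)` is a positive
real for every positive definite `X`, and `f` is geodesically convex. -/
theorem fdet_geodesically_convex {m n : ℕ} (A : Fin m → Matrix (Fin n) (Fin n) ℂ)
    (hA : (∑ k, A k * (A k)ᴴ).PosDef) :
    (∀ X : Matrix (Fin n) (Fin n) ℂ, X.PosDef →
        0 < (Tcp A X).det.re ∧ (Tcp A X).det.im = 0)
      ∧ (∀ X : Matrix (Fin n) (Fin n) ℂ, X.PosDef →
          ∀ S : Matrix (Fin n) (Fin n) ℂ, S.IsHermitian →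
            ConvexOn ℝ Set.univ
              (fun t : ℝ => fdet A (matSqrt X * NormedSpace.exp (t • S) * matSqrt X))) :=
  ⟨(fdet_geodesically_convex_general A hA).1, fun X hX S hS ↦ by
    simpa only [(matSqrt_posDef hX).1.eq] using!
      (fdet_geodesically_convex_general A hA).2 _ (matSqrt_posDef hX).isUnit S hS⟩
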